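/- arXiv:2407.10316 — 4 statements merged into one kernel-verified Lean document; each statement's English description precedes it below -/
import Mathlib

section
/- Let n ≥ 1 and let N be a matroid that is representable over the two-element field 𝔽₂ = ZMod 2. If there exists an online matroid embedding of the class of graphic matroids of rank at most n into N, then there is an injective rank-preserving map from the complete binary matroid of rank n into N. -/
open Set

/-- The rank of a set in a matroid: the supremum of the cardinalities of its
independent subsets. -/
noncomputable def mRank {α : Type*} (M : Matroid α) (S : Set α) : ℕ∞ :=
  ⨆ I ∈ {I : Set α | M.Indep I ∧ I ⊆ S}, I.encard

/-- The rank of a set of vectors: the dimension of its linear span. -/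
noncomputable def spanRank (K : Type*) [Field K] {W : Type*} [AddCommGroup W] [Module K W]
    (S : Set W) : ℕ :=
  Module.finrank K (Submodule.span K S)

/-- A matroid is representable over a field `K` if independence coincides with
`K`-linear independence of an assignment of vectors to the elements. -/
def RepOver (K : Type*) [Field K] {α : Type*} (M : Matroid α) : Prop :=
  ∃ (ι : Type) (f : α → ι → K), ∀ I : Set α,
    M.Indep I ↔ I ⊆ M.E ∧ LinearIndependent K (fun x : I => f (x : α))

/-- The `k`-prefix of an ordered matroid on `Fin m`: its restriction to the
first `k` elements, viewed as a matroid on `Fin k`. -/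
def prefixMatroid {k m : ℕ} (h : k ≤ m) (M : Matroid (Fin m)) : Matroid (Fin k) :=
  M.comap (Fin.castLE h)

/-- An online matroid morphism (OMM) of the class `P` of ordered matroids into the host
matroid `N`: a rank-preserving map for each matroid of the class, consistent on prefixes. -/
def OMMof (P : (m : ℕ) → Matroid (Fin m) → Prop) {β : Type*} (N : Matroid β) : Prop :=
  ∃ f : (m : ℕ) → Matroid (Fin m) → (Fin m → β),
    (∀ m (M : Matroid (Fin m)), P m M →
      ∀ S : Set (Fin m), S ⊆ M.E → mRank N (f m M '' S) = mRank M S) ∧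
    (∀ k m (hkm : k ≤ m) (M : Matroid (Fin m)), P m M →
      ∀ i : Fin k, f k (prefixMatroid hkm M) i = f m M (Fin.castLE hkm i))

/-- An online matroid embedding (OME): an online matroid morphism all of whose maps are
injective. -/
def OMEof (P : (m : ℕ) → Matroid (Fin m) → Prop) {β : Type*} (N : Matroid β) : Prop :=
  ∃ f : (m : ℕ) → Matroid (Fin m) → (Fin m → β),
    (∀ m (M : Matroid (Fin m)), P m M → Function.Injective (f m M)) ∧
    (∀ m (M : Matroid (Fin m)), P m M →
      ∀ S : Set (Fin m), S ⊆ M.E → mRank N (f m M '' S) = mRank M S) ∧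
    (∀ k m (hkm : k ≤ m) (M : Matroid (Fin m)), P m M →
      ∀ i : Fin k, f k (prefixMatroid hkm M) i = f m M (Fin.castLE hkm i))

/-- A matroid is graphic if it admits a rank-preserving `𝔽₂` vertex-edge incidence
representation: each element is sent to the zero vector or to the sum of two distinct
standard basis vectors (a vector supported on exactly two vertices). -/
def IsGraphic {α : Type*} (M : Matroid α) : Prop :=
  ∃ (V : Type) (_ : Fintype V) (g : α → V → ZMod 2),
    (∀ S : Set α, S ⊆ M.E → (spanRank (ZMod 2) (g '' S) : ℕ∞) = mRank M S) ∧
    ∀ e ∈ M.E, g e = 0 ∨ ∃ u v : V, u ≠ v ∧ {w | g e w ≠ 0} = {u, v}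

lemma mRank_eq_spanRank {K : Type*} [Field K] {W : Type*} [AddCommGroup W] [Module K W]
    {α : Type*} (M : Matroid α) (φ : α → W)
    (h : ∀ I : Set α, M.Indep I ↔ LinearIndepOn K φ I) (T : Set α) (hT : T.Finite) :
    mRank M T = (spanRank K (φ '' T) : ℕ∞) := by
  classical
  have key : ∀ I : Set α, I ⊆ T → LinearIndepOn K φ I → I.encard = (spanRank K (φ '' I) : ℕ∞) := by
    intro I hI hli
    have hfin := hT.subset hI
    have : Fintype I := hfin.fintype
    have := finrank_span_eq_card (R := K) hli.linearIndependent
    have hr : Set.range (fun x : I => φ x) = φ '' I := by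
      ext; simp
    rw [hr] at this
    unfold spanRank
    rw [this, ← Set.toFinset_card, Set.encard_eq_coe_toFinset_card]
  have hfd : FiniteDimensional K (Submodule.span K (φ '' T)) :=
    FiniteDimensional.span_of_finite K (hT.image φ)
  apply le_antisymm
  · unfold mRank
    refine iSup₂_le ?_
    rintro I ⟨hI, hIT⟩
    rw [key I hIT ((h I).1 hI)]
    exact_mod_cast Submodule.finrank_mono (Submodule.span_mono (Set.image_mono hIT))
  · obtain ⟨b, hbT, -, hTb, hb⟩ :=
      exists_linearIndepOn_extension (linearIndepOn_empty K φ) (Set.empty_subset T)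
    have hs : spanRank K (φ '' T) = spanRank K (φ '' b) := by
      unfold spanRank
      rw [le_antisymm (Submodule.span_le.2 hTb) (Submodule.span_mono (Set.image_mono hbT))]
    rw [hs, ← key b hbT hb]
    exact le_iSup₂_of_le (f := fun I (_ : I ∈ {I : Set α | M.Indep I ∧ I ⊆ T}) => I.encard)
      b ⟨(h b).2 hb, hbT⟩ le_rfl

/-- Linear matroid of a finite family of vectors. -/
def linMat {K : Type*} [Field K] {W : Type*} [AddCommGroup W] [Module K W] {m : ℕ}
    (φ : Fin m → W) : Matroid (Fin m) :=
  (IndepMatroid.ofFinite (E := (univ : Set (Fin m))) (Set.toFinite _)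
    (fun I => LinearIndepOn K φ I)
    (linearIndepOn_empty K φ)
    (fun _ _ hJ hIJ => hJ.mono hIJ)
    (by
      intro I J hI hJ hlt
      by_contra! hcon
      have hsub : φ '' J ⊆ Submodule.span K (φ '' I) := by
        rintro _ ⟨e, heJ, rfl⟩
        by_cases heI : e ∈ I
        · exact Submodule.subset_span ⟨e, heI, rfl⟩
        · by_contra hns
          exact hcon e heJ heI (hI.insert hns)
      have hle := Submodule.span_le.2 hsub
      have hfd : FiniteDimensional K (Submodule.span K (φ '' I)) :=
        FiniteDimensional.span_of_finite K (Set.toFinite _)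
      have hfr := Submodule.finrank_mono hle
      have card : ∀ I : Set (Fin m), LinearIndepOn K φ I →
          Module.finrank K (Submodule.span K (φ '' I)) = I.ncard := by
        classical
        intro I hI
        have := finrank_span_eq_card (R := K) hI.linearIndependent
        have hr : Set.range (fun x : I => φ x) = φ '' I := by
          ext; simp
        rw [hr] at this
        rw [this, ← Nat.card_eq_fintype_card, Nat.card_coe_set_eq]
      rw [card I hI, card J hJ] at hfr
      omega)
    (fun _ _ => Set.subset_univ _)).matroid

lemma linMat_E {K : Type*} [Field K] {W : Type*} [AddCommGroup W] [Module K W] {m : ℕ}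
    (φ : Fin m → W) : (linMat (K := K) φ).E = univ := rfl

lemma linMat_indep {K : Type*} [Field K] {W : Type*} [AddCommGroup W] [Module K W] {m : ℕ}
    (φ : Fin m → W) (I : Set (Fin m)) : (linMat (K := K) φ).Indep I ↔ LinearIndepOn K φ I := by
  simp [linMat, IndepMatroid.ofFinite, IndepMatroid.ofBddAugment, IndepMatroid.ofBdd]

lemma prefix_linMat {K : Type*} [Field K] {W : Type*} [AddCommGroup W] [Module K W] {k m : ℕ}
    (h : k ≤ m) (φ : Fin m → W) :
    prefixMatroid h (linMat (K := K) φ) = linMat (K := K) (φ ∘ Fin.castLE h) := by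
  apply Matroid.ext_indep
  · simp [prefixMatroid, linMat_E]
  · intro I _
    have hinj : InjOn (Fin.castLE h) I := (Fin.castLE_injective h).injOn
    simp only [prefixMatroid, Matroid.comap_indep_iff, linMat_indep]
    constructor
    · rintro ⟨h1, -⟩
      exact h1.comp_of_image hinj
    · intro h1
      exact ⟨h1.image_of_comp _ _, hinj⟩

lemma exists_perm {n : ℕ} (w : Fin n → ZMod 2) :
    ∃ (k : ℕ) (τ : Equiv.Perm (Fin n)), k ≤ n ∧ ∀ j, w (τ j) = if (j : ℕ) < k then 1 else 0 := by
  classical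
  have hk : Fintype.card {i // w i = 1} ≤ n := by
    simpa using Fintype.card_subtype_le (fun i => w i = 1)
  refine ⟨Fintype.card {i // w i = 1}, ?_⟩
  have hc : Fintype.card {j : Fin n // (j : ℕ) < Fintype.card {i // w i = 1}}
      = Fintype.card {i // w i = 1} := by
    conv_rhs => rw [← Fintype.card_fin (Fintype.card {i // w i = 1})]
    exact Fintype.card_congr
      ⟨fun j => ⟨j.1, j.2⟩, fun j => ⟨⟨j, j.2.trans_le hk⟩, j.2⟩, fun _ => rfl, fun _ => rfl⟩
  let e := Fintype.equivOfCardEq hc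
  refine ⟨e.extendSubtype, hk, fun j => ?_⟩
  split_ifs with hj
  · exact e.extendSubtype_mem j hj
  · have := e.extendSubtype_not_mem j hj
    have h2 : ∀ x : ZMod 2, x ≠ 1 → x = 0 := by decide
    exact h2 _ this

/-- Extension by zero of a vector. -/
def extz {n : ℕ} (u : Fin n → ZMod 2) (k : ℕ) : ZMod 2 := if h : k < n then u ⟨k, h⟩ else 0

/-- Incidence map of a path. -/
def pathMap {n : ℕ} (τ : Equiv.Perm (Fin n)) :
    (Fin n → ZMod 2) →ₗ[ZMod 2] (Fin (n + 1) → ZMod 2) where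
  toFun w v := (if (v : ℕ) = 0 then 0 else extz (w ∘ τ) (v - 1)) + extz (w ∘ τ) v
  map_add' x y := by
    ext v
    simp only [extz, Pi.add_apply, Function.comp]
    split_ifs <;> ring
  map_smul' c x := by
    ext v
    simp only [extz, Pi.smul_apply, Function.comp, smul_eq_mul, RingHom.id_apply]
    split_ifs <;> ring

lemma pathMap_inj {n : ℕ} (τ : Equiv.Perm (Fin n)) : Function.Injective (pathMap τ) := by
  rw [injective_iff_map_eq_zero]
  intro w hw
  have h : ∀ k, k < n → extz (w ∘ τ) k = 0 := by
    intro k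
    induction k with
    | zero =>
      intro _
      simpa [pathMap] using congrFun hw ⟨0, by omega⟩
    | succ k ih =>
      intro hk
      have := congrFun hw ⟨k + 1, by omega⟩
      simpa [pathMap, ih (by omega)] using this
  ext i
  have := h (τ.symm i) (τ.symm i).2
  simpa [extz] using this

lemma pathMap_supp {n : ℕ} (τ : Equiv.Perm (Fin n)) (w : Fin n → ZMod 2) (a b : ℕ) (hab : a ≤ b)
    (hb : b ≤ n) (hw : ∀ j, w (τ j) = if a ≤ (j : ℕ) ∧ (j : ℕ) < b then 1 else 0) :
    pathMap τ w = 0 ∨ ∃ u v : Fin (n + 1), u ≠ v ∧ {x | pathMap τ w x ≠ 0} = {u, v} := by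
  have hext : ∀ k, extz (w ∘ τ) k = if a ≤ k ∧ k < b then 1 else 0 := by
    intro k
    unfold extz
    split_ifs with h1 h2 h2
    · simp [hw, h2]
    · simp only [Function.comp, hw]; rw [if_neg h2]
    · omega
    · rfl
  have h2 : (1 : ZMod 2) + 1 = 0 := by decide
  rcases hab.eq_or_lt with rfl | hlt
  · left
    ext v
    simp only [pathMap, LinearMap.coe_mk, AddHom.coe_mk, hext]
    have h3 : ∀ x, ¬ (a ≤ x ∧ x < a) := by intro x; omega
    simp [h3]
  · right
    refine ⟨⟨a, by omega⟩, ⟨b, by omega⟩, by simp; omega, ?_⟩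
    ext v
    simp only [pathMap, LinearMap.coe_mk, AddHom.coe_mk, hext, Set.mem_ofPred_eq,
      Set.mem_insert_iff, Set.mem_singleton_iff, Fin.ext_iff]
    split_ifs <;> simp [h2] <;> omega

/-- Vectors: standard basis, then `w`. -/
def hvec {n : ℕ} (w : Fin n → ZMod 2) : Fin (n + 1) → (Fin n → ZMod 2) :=
  Fin.snoc (α := fun _ => Fin n → ZMod 2) (fun i => Pi.single i 1) w

lemma linMat_mRank {n m : ℕ} (φ : Fin m → (Fin n → ZMod 2)) (S : Set (Fin m)) :
    mRank (linMat (K := ZMod 2) φ) S = (spanRank (ZMod 2) (φ '' S) : ℕ∞) :=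
  mRank_eq_spanRank _ φ (linMat_indep φ) S (Set.toFinite _)

lemma spanRank_map {W W' : Type*} [AddCommGroup W] [Module (ZMod 2) W]
    [AddCommGroup W'] [Module (ZMod 2) W'] (L : W →ₗ[ZMod 2] W') (hL : Function.Injective L)
    (S : Set W) : spanRank (ZMod 2) (L '' S) = spanRank (ZMod 2) S := by
  unfold spanRank
  rw [← Submodule.map_span]
  exact (LinearEquiv.finrank_eq (Submodule.equivMapOfInjective L hL _)).symm

lemma good_linMat {n : ℕ} (w : Fin n → ZMod 2) :
    (linMat (K := ZMod 2) (hvec w)).E = univ ∧ IsGraphic (linMat (K := ZMod 2) (hvec w)) ∧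
      mRank (linMat (K := ZMod 2) (hvec w)) univ ≤ (n : ℕ∞) := by
  refine ⟨rfl, ?_, ?_⟩
  · obtain ⟨k, τ, hk, hτ⟩ := exists_perm w
    refine ⟨Fin (n + 1), inferInstance, fun e => pathMap τ (hvec w e), ?_, ?_⟩
    · intro S _
      rw [linMat_mRank, ← spanRank_map (pathMap τ) (pathMap_inj τ), Set.image_image]
    · intro e _
      induction e using Fin.lastCases with
      | last =>
        apply pathMap_supp τ _ 0 k (by omega) hk
        intro j
        simp [hvec, hτ]
      | cast i =>
        apply pathMap_supp τ _ (τ.symm i) (τ.symm i + 1) (by omega) (by omega)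
        intro j
        have : (((τ.symm i : Fin n) : ℕ) ≤ j ∧ (j : ℕ) < (τ.symm i : Fin n) + 1) ↔ τ j = i := by
          rw [← Equiv.eq_symm_apply, Fin.ext_iff]; omega
        simp only [hvec, Fin.snoc_castSucc, this, Pi.single_apply]
  · rw [linMat_mRank]
    unfold spanRank
    have := Submodule.finrank_le (Submodule.span (ZMod 2) (hvec w '' univ))
    simpa using this

/-- Binary matroids with the same rank function. -/
lemma indep_of_rank {m : ℕ} {W W' : Type*} [AddCommGroup W] [Module (ZMod 2) W]
    [AddCommGroup W'] [Module (ZMod 2) W'] (A : Fin m → W) (h : Fin m → W')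
    (hr : ∀ T : Set (Fin m), spanRank (ZMod 2) (A '' T) = spanRank (ZMod 2) (h '' T))
    (T : Set (Fin m)) : LinearIndepOn (ZMod 2) A T ↔ LinearIndepOn (ZMod 2) h T := by
  classical
  unfold LinearIndepOn
  rw [linearIndependent_iff_card_eq_finrank_span, linearIndependent_iff_card_eq_finrank_span]
  have := hr T
  unfold spanRank at this
  have h1 : Set.range (fun x : T => A x) = A '' T := by ext; simp
  have h2 : Set.range (fun x : T => h x) = h '' T := by ext; simp
  rw [Set.finrank, Set.finrank, h1, h2, this]

lemma z2cases (x : ZMod 2) : x = 0 ∨ x = 1 := by revert x; decide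

lemma last_eq {n : ℕ} {W : Type*} [AddCommGroup W] [Module (ZMod 2) W] (w : Fin n → ZMod 2)
    (A : Fin (n + 1) → W)
    (hr : ∀ T : Set (Fin (n + 1)),
      spanRank (ZMod 2) (A '' T) = spanRank (ZMod 2) (hvec w '' T)) :
    A (Fin.last n) = ∑ i, w i • A i.castSucc := by
  classical
  have hind := indep_of_rank A (hvec w) hr
  -- coefficients of the circuit
  let C : Fin (n + 1) → ZMod 2 := Fin.snoc (α := fun _ => ZMod 2) w 1
  have hC : ∑ i, C i • hvec w i = 0 := by
    ext j
    rw [Fin.sum_univ_castSucc]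
    simp [C, hvec, Finset.sum_apply, Pi.single_apply]
    rcases z2cases (w j) with h | h <;> rw [h] <;> rfl
  have hdep : ¬ LinearIndepOn (ZMod 2) A {i | C i ≠ 0} := by
    rw [hind, linearIndepOn_iff']
    intro H
    have := H (Finset.univ.filter (fun i => C i ≠ 0)) C (by simp)
      (by
        rw [Finset.sum_filter_of_ne, hC]
        intro x _ hx h0
        exact hx (by rw [h0, zero_smul])) (Fin.last n) (by simp [C])
    simp [C] at this
  rw [linearIndepOn_iff''] at hdep
  push Not at hdep
  obtain ⟨t, c, hts, hct, hsum, i0, hi0⟩ := hdep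
  have hsum' : ∑ i, c i • A i = 0 := by
    rw [← hsum]
    symm
    apply Finset.sum_subset (Finset.subset_univ _)
    intro x _ hx
    rw [hct x hx, zero_smul]
  have hcC : ∀ i, c i ≠ 0 → C i ≠ 0 := by
    intro i hi
    by_contra h0
    have : i ∉ t := fun hit => hts hit h0
    exact hi (hct i this)
  have hdep2 : ¬ LinearIndepOn (ZMod 2) (hvec w) {i | c i ≠ 0} := by
    rw [← hind, linearIndepOn_iff']
    intro H
    refine hi0.2 (H (Finset.univ.filter (fun i => c i ≠ 0)) c (by simp) ?_ i0 (by simp [hi0.2]))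
    rw [Finset.sum_filter_of_ne, hsum']
    intro x _ hx h0
    exact hx (by rw [h0, zero_smul])
  rw [linearIndepOn_iff''] at hdep2
  push Not at hdep2
  obtain ⟨t', d, hts', hdt', hsumd, i1, hi1⟩ := hdep2
  have hsumd' : ∑ i, d i • hvec w i = 0 := by
    rw [← hsumd]
    symm
    apply Finset.sum_subset (Finset.subset_univ _)
    intro x _ hx
    rw [hdt' x hx, zero_smul]
  have hdc : ∀ i, d i ≠ 0 → c i ≠ 0 := by
    intro i hi
    by_contra h0
    have : i ∉ t' := fun hit => hts' hit h0
    exact hi (hdt' i this)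
  have hcoord : ∀ j : Fin n, d j.castSucc + d (Fin.last n) * w j = 0 := by
    intro j
    have := congrFun hsumd' j
    rw [Fin.sum_univ_castSucc] at this
    simpa [hvec, Finset.sum_apply, Pi.single_apply] using this
  have hdl : d (Fin.last n) = 1 := by
    rcases z2cases (d (Fin.last n)) with h | h
    · exfalso
      apply hi1.2
      induction i1 using Fin.lastCases with
      | last => exact h
      | cast j => simpa [h] using hcoord j
    · exact h
  have hcl : c (Fin.last n) = 1 := by
    rcases z2cases (c (Fin.last n)) with h | h
    · exact absurd h (hdc _ (by rw [hdl]; decide))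
    · exact h
  have hcw : ∀ j : Fin n, c j.castSucc = w j := by
    intro j
    have h1 := hcoord j
    rw [hdl, one_mul] at h1
    rcases z2cases (w j) with h | h
    · rw [h]
      by_contra h0
      apply hcC _ h0
      simp [C, h]
    · rw [h]
      have : d j.castSucc ≠ 0 := by
        intro h0
        rw [h0, h] at h1
        revert h1; decide
      rcases z2cases (c j.castSucc) with h' | h'
      · exact absurd h' (hdc _ this)
      · exact h'
  rw [Fin.sum_univ_castSucc, hcl, one_smul] at hsum'
  simp only [hcw] at hsum'
  have hneg : ∀ x : W, -x = x := fun x => by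
    have h1 : (-1 : ZMod 2) = 1 := by decide
    rw [← neg_one_smul (ZMod 2) x, h1, one_smul]
  rw [← hneg (A (Fin.last n))]
  exact neg_eq_of_add_eq_zero_left hsum'

lemma hvec_prefix {n : ℕ} (w : Fin n → ZMod 2) :
    hvec w ∘ Fin.castLE (Nat.le_succ n) = fun i => Pi.single i 1 := by
  funext i
  have : Fin.castLE (Nat.le_succ n) i = i.castSucc := rfl
  simp only [Function.comp, this, hvec, Fin.snoc_castSucc]

/-- If `N` is a binary-representable matroid admitting an online matroid embedding of the
class of graphic matroids of rank at most `n` (`n ≥ 1`), then there is an injective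
rank-preserving map from the complete binary matroid of rank `n` into `N`. -/
theorem stmt8 {β : Type*} (n : ℕ) (hn : 1 ≤ n) (N : Matroid β)
    (hrep : RepOver (ZMod 2) N)
    (hOME : OMEof (fun _ M => M.E = univ ∧ IsGraphic M ∧ mRank M univ ≤ (n : ℕ∞)) N) :
    ∃ g : (Fin n → ZMod 2) → β, Function.Injective g ∧
      ∀ S : Set (Fin n → ZMod 2), mRank N (g '' S) = (spanRank (ZMod 2) S : ℕ∞) := by
  classical
  obtain ⟨ι, φ₀, hφ₀⟩ := hrep
  obtain ⟨f, -, hfr, hfp⟩ := hOME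
  let φ : β → (ι → ZMod 2) := fun x => if x ∈ N.E then φ₀ x else 0
  have hφ : ∀ I : Set β, N.Indep I ↔ LinearIndepOn (ZMod 2) φ I := by
    intro I
    rw [hφ₀]
    constructor
    · rintro ⟨hI, hli⟩
      have hli' : LinearIndepOn (ZMod 2) φ₀ I := hli
      refine hli'.congr ?_
      intro x hx
      simp [φ, hI hx]
    · intro hli
      have hI : I ⊆ N.E := by
        intro x hx
        by_contra hxE
        exact hli.ne_zero hx (by simp [φ, hxE])
      refine ⟨hI, ?_⟩
      have : LinearIndepOn (ZMod 2) φ₀ I := hli.congr (by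
        intro x hx
        simp [φ, hI hx])
      exact this
  have hrank := fun (T : Set β) (hT : T.Finite) => mRank_eq_spanRank N φ hφ T hT
  let g : (Fin n → ZMod 2) → β := fun w => f (n + 1) (linMat (K := ZMod 2) (hvec w)) (Fin.last n)
  let b : Fin n → β := f n (linMat (K := ZMod 2) (fun i : Fin n => (Pi.single i 1 : Fin n → ZMod 2)))
  have hb : ∀ (w : Fin n → ZMod 2) (i : Fin n),
      f (n + 1) (linMat (K := ZMod 2) (hvec w)) i.castSucc = b i := by
    intro w i
    have := hfp n (n + 1) (Nat.le_succ n) _ (good_linMat w) i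
    rw [prefix_linMat, hvec_prefix] at this
    exact this.symm
  have hr : ∀ (w : Fin n → ZMod 2) (T : Set (Fin (n + 1))),
      spanRank (ZMod 2) ((fun i => φ (f (n + 1) (linMat (K := ZMod 2) (hvec w)) i)) '' T)
        = spanRank (ZMod 2) (hvec w '' T) := by
    intro w T
    have := hfr (n + 1) _ (good_linMat w) T (Set.subset_univ _)
    rw [linMat_mRank, hrank _ (Set.toFinite _), Set.image_image] at this
    exact_mod_cast this
  let L : (Fin n → ZMod 2) →ₗ[ZMod 2] (ι → ZMod 2) :=
    Fintype.linearCombination (ZMod 2) (fun i => φ (b i))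
  have hg : ∀ w, φ (g w) = L w := by
    intro w
    have := last_eq w _ (hr w)
    simp only [hb] at this
    simpa [L, Fintype.linearCombination_apply] using this
  have hL : Function.Injective L := by
    have h1 := (indep_of_rank _ _ (hr 0) (Set.range Fin.castSucc)).2 (by
      rw [← Set.image_univ]
      apply LinearIndepOn.image_of_comp
      rw [linearIndepOn_univ_iff]
      have : (hvec (0 : Fin n → ZMod 2)) ∘ Fin.castSucc = fun i => Pi.single i 1 :=
        hvec_prefix 0
      rw [this]
      exact Pi.linearIndependent_single_one (Fin n) (ZMod 2))
    rw [← Set.image_univ] at h1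
    have h2 := h1.comp_of_image (Fin.castSucc_injective n).injOn
    rw [linearIndepOn_univ_iff] at h2
    have h3 : ((fun i => φ (f (n + 1) (linMat (K := ZMod 2) (hvec (0 : Fin n → ZMod 2))) i)) ∘
        Fin.castSucc) = fun i => φ (b i) := by
      funext i
      simp only [Function.comp, hb]
    rw [h3] at h2
    exact (linearIndependent_iff_injective_fintypeLinearCombination).1 h2
  refine ⟨g, ?_, ?_⟩
  · intro x y hxy
    apply hL
    rw [← hg, ← hg, hxy]
  · intro S
    rw [hrank _ (Set.toFinite _), Set.image_image]
    simp only [hg]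
    rw [spanRank_map L hL]
end

section
/- There is no regular matroid N (i.e., a matroid representable over every field) for which there exists an online matroid embedding of the class of all graphic matroids into N. -/
open Set

lemma aux_mRank_eq {α : Type*} (M : Matroid α) (S : Set α) : mRank M S = M.eRk S := by
  unfold mRank
  apply le_antisymm
  · exact iSup₂_le fun I hI => hI.1.encard_le_eRk_of_subset hI.2
  · obtain ⟨I, hI⟩ := M.exists_isBasis' S
    rw [hI.eRk_eq_encard]
    exact le_iSup₂_of_le I ⟨hI.indep, hI.subset⟩ le_rfl

section vec
variable {K : Type*} [Field K] {W : Type*} [AddCommGroup W] [Module K W] {α : Type*} [Finite α]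

lemma aux_card (v : α → W) {I : Set α} (hI : LinearIndepOn K v I) :
    Module.finrank K (Submodule.span K (v '' I)) = I.ncard := by
  classical
  have := Fintype.ofFinite I
  have h := finrank_span_eq_card (R := K) (b := fun x : I => v x) hI
  rw [← Nat.card_eq_fintype_card, Nat.card_coe_set_eq] at h
  rw [← h, image_eq_range]

/-- The vector matroid of a finite family. -/
noncomputable def vecMat (K : Type*) [Field K] {W : Type*} [AddCommGroup W] [Module K W]
    {α : Type*} [Finite α] (v : α → W) : Matroid α :=
  (IndepMatroid.ofFinite (E := univ) (Set.toFinite _) (fun I => LinearIndepOn K v I)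
    (linearIndepOn_empty K v) (fun _ _ hJ h => hJ.mono h)
    (by
      intro I J hI hJ hlt
      by_contra! hcon
      have hsub : v '' J ⊆ Submodule.span K (v '' I) := by
        rintro _ ⟨e, he, rfl⟩
        by_contra hn
        have heI : e ∉ I := fun h => hn (Submodule.subset_span ⟨e, h, rfl⟩)
        exact hcon e he heI (hI.insert hn)
      have hfin : Module.Finite K (Submodule.span K (v '' I)) :=
        FiniteDimensional.span_of_finite K (Set.toFinite _)
      have := Submodule.finrank_mono (Submodule.span_le.2 hsub)
      rw [aux_card v hI, aux_card v hJ] at this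
      omega)
    (fun _ _ => subset_univ _)).matroid

lemma vecMat_E (v : α → W) : (vecMat K v).E = univ := by simp [vecMat]

lemma vecMat_indep (v : α → W) (I : Set α) : (vecMat K v).Indep I ↔ LinearIndepOn K v I := by
  simp [vecMat]

lemma vecMat_rank (v : α → W) (S : Set α) :
    (spanRank K (v '' S) : ℕ∞) = mRank (vecMat K v) S := by
  rw [aux_mRank_eq]
  obtain ⟨I, hI⟩ := (vecMat K v).exists_isBasis' S
  rw [hI.eRk_eq_encard]
  have hli := (vecMat_indep v I).1 hI.indep
  have : Submodule.span K (v '' S) = Submodule.span K (v '' I) := by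
    apply le_antisymm
    · rw [Submodule.span_le]
      rintro _ ⟨e, he, rfl⟩
      by_contra hn
      have heI : e ∉ I := fun h => hn (Submodule.subset_span ⟨e, h, rfl⟩)
      have h2 := hli.insert hn
      have := hI.mem_of_insert_indep he ((vecMat_indep v _).2 h2)
      exact heI this
    · exact Submodule.span_mono (image_mono hI.subset)
  unfold spanRank
  rw [this, aux_card v hli, (Set.toFinite I).cast_ncard_eq]

end vec

/-- Four graphs on four vertices with four edges, the first three of which form a tree. -/
def vv : Fin 4 → Fin 4 → Fin 4 → ZMod 2 :=
  ![![![1,1,0,0], ![0,1,1,0], ![0,0,1,1], ![1,0,1,0]],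
    ![![1,1,0,0], ![0,0,1,1], ![0,1,1,0], ![1,0,1,0]],
    ![![0,0,1,1], ![1,1,0,0], ![0,1,1,0], ![1,0,1,0]],
    ![![1,1,0,0], ![0,1,1,0], ![0,0,1,1], ![1,0,0,1]]]

/-- The circuits. -/
def cc : Fin 4 → Finset (Fin 4) := ![{0,1,3}, {0,2,3}, {1,2,3}, {0,1,2,3}]

lemma z2 (a : ZMod 2) : a ≠ 0 → a = 1 := by revert a; decide

lemma dep_iff {W : Type*} [AddCommGroup W] [Module (ZMod 2) W] {α : Type*} [DecidableEq α]
    (w : α → W) (C : Finset α) :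
    ¬ LinearIndepOn (ZMod 2) w (C : Set α) ↔ ∃ D ⊆ C, D.Nonempty ∧ ∑ i ∈ D, w i = 0 := by
  rw [not_linearIndepOn_finset_iff]
  constructor
  · rintro ⟨g, hg, i, hi, hne⟩
    refine ⟨C.filter (fun i => g i ≠ 0), Finset.filter_subset _ _, ⟨i, by simp [hi, hne]⟩, ?_⟩
    rw [← hg, Finset.sum_filter]
    refine Finset.sum_congr rfl fun j _ => ?_
    by_cases h : g j = 0
    · simp [h]
    · simp [z2 _ h]
  · rintro ⟨D, hDC, ⟨i, hi⟩, hs⟩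
    refine ⟨fun j => if j ∈ D then 1 else 0, ?_, i, hDC hi, by simp [hi]⟩
    simp only [ite_smul, one_smul, zero_smul]
    rw [← Finset.sum_filter, Finset.filter_mem_eq_inter, Finset.inter_eq_right.2 hDC, hs]

lemma vv_indep (s : Fin 4) (C : Finset (Fin 4)) :
    LinearIndepOn (ZMod 2) (vv s) (C : Set (Fin 4)) ↔ ¬ cc s ⊆ C := by
  rw [← not_iff_not, dep_iff, not_not]
  revert s C
  decide

lemma circ_sum {W : Type*} [AddCommGroup W] [Module (ZMod 2) W] (w : Fin 4 → W) (s : Fin 4)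
    (h : ∀ C : Finset (Fin 4), LinearIndepOn (ZMod 2) w (C : Set (Fin 4)) ↔ ¬ cc s ⊆ C) :
    ∑ i ∈ cc s, w i = 0 := by
  have h1 : ¬ LinearIndepOn (ZMod 2) w (cc s : Set (Fin 4)) := by rw [h]; simp
  obtain ⟨D, hD, hne, hs⟩ := (dep_iff _ _).1 h1
  have h2 : ¬ LinearIndepOn (ZMod 2) w (D : Set (Fin 4)) := (dep_iff _ _).2 ⟨D, subset_rfl, hne, hs⟩
  rw [h, not_not] at h2
  rwa [Finset.Subset.antisymm h2 hD]

lemma vv_graphic (s : Fin 4) : IsGraphic (vecMat (ZMod 2) (vv s)) := by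
  refine ⟨Fin 4, inferInstance, vv s, fun S _ => vecMat_rank _ _, fun e he => Or.inr ?_⟩
  clear he
  have : ∃ u v : Fin 4, u ≠ v ∧ ∀ w, vv s e w ≠ 0 ↔ w = u ∨ w = v := by
    revert s e; decide
  obtain ⟨u, v, h, h'⟩ := this
  exact ⟨u, v, h, by ext w; simpa using h' w⟩

lemma vv_prefix (s : Fin 4) :
    prefixMatroid (by norm_num : 3 ≤ 4) (vecMat (ZMod 2) (vv s)) = Matroid.freeOn univ := by
  apply Matroid.ext_indep
  · simp [prefixMatroid, vecMat_E]
  · intro I _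
    simp only [prefixMatroid, Matroid.comap_indep_iff, vecMat_indep, Matroid.freeOn_indep_iff,
      subset_univ, iff_true]
    refine ⟨?_, (Fin.castLE_injective _).injOn⟩
    have : LinearIndepOn (ZMod 2) (vv s) (({0,1,2} : Finset (Fin 4)) : Set (Fin 4)) := by
      rw [vv_indep]
      exact (by decide : ∀ s, ¬ cc s ⊆ {0, 1, 2}) s
    refine this.mono ?_
    rintro _ ⟨i, _, rfl⟩
    fin_cases i <;> simp <;> decide

/-- The Fano configuration. -/
def fano {K : Type*} [Field K] : Fin 7 → Fin 3 → K :=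
  ![![1,0,0], ![0,1,0], ![0,0,1], ![1,1,0], ![1,0,1], ![0,1,1], ![1,1,1]]

lemma no_fano {K : Type*} [Field K] (h2 : (2 : K) ≠ 0) (B : Fin 7 → Fin 3 → K)
    (h0 : B 0 = ![1,0,0]) (h1 : B 1 = ![0,1,0]) (h3 : B 2 = ![0,0,1])
    (h : ∀ t : Fin 3 → Fin 7, (Matrix.of (fano ∘ t) : Matrix _ _ (ZMod 2)).det = 0 ↔
      (Matrix.of (B ∘ t)).det = 0) : False := by
  have e1 := (h ![0,1,3]).1 (by decide)
  have e2 := (h ![0,2,4]).1 (by decide)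
  have e3 := (h ![1,2,5]).1 (by decide)
  have e4 := (h ![2,3,6]).1 (by decide)
  have e5 := (h ![1,4,6]).1 (by decide)
  have e6 := (h ![0,5,6]).1 (by decide)
  have e7 := (h ![3,4,5]).1 (by decide)
  have n1 := (h ![0,2,3]).not.1 (by decide)
  have n2 := (h ![1,2,3]).not.1 (by decide)
  have n3 := (h ![0,1,4]).not.1 (by decide)
  have n4 := (h ![1,2,4]).not.1 (by decide)
  have n5 := (h ![0,1,5]).not.1 (by decide)
  have n6 := (h ![0,2,5]).not.1 (by decide)
  have n7 := (h ![0,1,6]).not.1 (by decide)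
  have n8 := (h ![0,2,6]).not.1 (by decide)
  have n9 := (h ![1,2,6]).not.1 (by decide)
  clear h
  simp [Matrix.det_fin_three, h0, h1, h3] at e1 e2 e3 e4 e5 e6 e7 n1 n2 n3 n4 n5 n6 n7 n8 n9
  simp only [e1, e2, e3] at e4 e5 e6 e7
  have hz : 2 * (B 3 1 * B 4 0 * B 5 2) * (B 6 0 * B 6 1 * B 6 2) = 0 := by
    linear_combination (-(B 6 0 * B 6 1 * B 6 2)) * e7 - (B 4 2 * B 6 0 * B 5 1 * B 6 2) * e4
      - (B 3 1 * B 6 0 * B 5 1 * B 6 2) * e5 - (B 3 1 * B 6 0 * B 4 0 * B 6 2) * e6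
  simp_all

lemma pullback_span {K : Type*} [Field K] {W : Type*} [AddCommGroup W] [Module K W]
    {x : Fin 3 → W} (hx : LinearIndependent K x) {n : ℕ} (A : Fin n → Fin 3 → K) :
    LinearIndependent K (fun i => ∑ j, A i j • x j) ↔ LinearIndependent K A := by
  have hinj : LinearMap.ker (Fintype.linearCombination K x) = ⊥ :=
    LinearMap.ker_eq_bot.2 hx.fintypeLinearCombination_injective
  rw [← LinearMap.linearIndependent_iff _ hinj]
  rfl

lemma li_det {K : Type*} [Field K] (A : Fin 3 → Fin 3 → K) :
    LinearIndependent K A ↔ (Matrix.of A).det ≠ 0 := by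
  rw [← isUnit_iff_ne_zero, ← Matrix.isUnit_iff_isUnit_det, ← Matrix.linearIndependent_rows_iff_isUnit]
  rfl

theorem stmt9 (β : Type*) (N : Matroid β)
    (hreg : ∀ (K : Type) [Field K], RepOver K N) :
    ¬ OMEof (fun _ M => M.E = univ ∧ IsGraphic M) N := by
  rintro ⟨f, hinj, hrk, hpre⟩
  have hP : ∀ s, (vecMat (ZMod 2) (vv s)).E = univ ∧ IsGraphic (vecMat (ZMod 2) (vv s)) :=
    fun s => ⟨vecMat_E _, vv_graphic s⟩
  set F : Fin 4 → Fin 4 → β := fun s => f 4 (vecMat (ZMod 2) (vv s)) with hF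
  have hFinj : ∀ s, Function.Injective (F s) := fun s => hinj _ _ (hP s)
  have hInd : ∀ s (C : Finset (Fin 4)), N.Indep (F s '' C) ↔ ¬ cc s ⊆ C := by
    intro s C
    have h := hrk _ _ (hP s) C (by simp [vecMat_E])
    rw [aux_mRank_eq, aux_mRank_eq] at h
    rw [← vv_indep, ← vecMat_indep, Matroid.indep_iff_eRk_eq_encard_of_finite (Set.toFinite _),
      Matroid.indep_iff_eRk_eq_encard_of_finite (Set.toFinite _), h, (hFinj s).encard_image]
  set x : Fin 3 → β := f 3 (Matroid.freeOn univ) with hx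
  have hFx : ∀ s (i : Fin 3), F s (Fin.castLE (by norm_num) i) = x i := by
    intro s i
    rw [hx, ← vv_prefix s]
    exact (hpre 3 4 (by norm_num) _ (hP s) i).symm
  have hE : ∀ s i, F s i ∈ N.E := by
    intro s i
    have : N.Indep (F s '' ({i} : Finset (Fin 4))) := by
      rw [hInd]; revert s i; decide
    exact this.subset_ground ⟨i, by simp, rfl⟩
  set y : Fin 7 → β := ![x 0, x 1, x 2, F 0 3, F 1 3, F 2 3, F 3 3] with hy
  have hxE : ∀ i, x i ∈ N.E := fun i => by rw [← hFx 0]; exact hE _ _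
  have hyE : ∀ i, y i ∈ N.E := by
    intro i
    fin_cases i <;> simp [hy, hxE, hE]
  have key : ∀ (K : Type) [Field K] (ι : Type) (φ : β → ι → K), (∀ I : Set β,
      N.Indep I ↔ I ⊆ N.E ∧ LinearIndependent K (fun x : I => φ (x : β))) →
      ∀ (n : ℕ) (t : Fin n → β), (∀ i, t i ∈ N.E) →
      (LinearIndependent K (φ ∘ t) ↔ Function.Injective t ∧ N.Indep (range t)) := by
    intro K _ ι φ hφ n t ht
    have h0 : range t ⊆ N.E := by rintro _ ⟨i, rfl⟩; exact ht i
    constructor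
    · intro h
      have hi : Function.Injective t := h.injective.of_comp
      exact ⟨hi, (hφ _).2 ⟨h0, (linearIndepOn_range_iff hi φ).2 h⟩⟩
    · rintro ⟨hi, h⟩
      exact (linearIndepOn_range_iff hi φ).1 ((hφ _).1 h).2
  obtain ⟨ι₂, φ₂, h₂⟩ := hreg (ZMod 2)
  have h23 : (2 : ZMod 3) ≠ 0 := by decide
  have : Fact (Nat.Prime 3) := ⟨by norm_num⟩
  obtain ⟨ι₃, φ₃, h₃⟩ := hreg (ZMod 3)
  have H : ∀ (n : ℕ) (t : Fin n → β), (∀ i, t i ∈ N.E) →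
      (LinearIndependent (ZMod 2) (φ₂ ∘ t) ↔ LinearIndependent (ZMod 3) (φ₃ ∘ t)) :=
    fun n t ht => (key _ _ _ h₂ n t ht).trans (key _ _ _ h₃ n t ht).symm
  -- binary side
  have hx2 : LinearIndependent (ZMod 2) (φ₂ ∘ x) := by
    rw [key _ _ _ h₂ _ _ hxE]
    have hxF : x = F 0 ∘ Fin.castLE (by norm_num) := funext fun i => (hFx 0 i).symm
    constructor
    · rw [hxF]; exact (hFinj 0).comp (Fin.castLE_injective _)
    · refine ((hInd 0 {0,1,2}).2 (by decide)).subset ?_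
      rw [hxF]
      rintro _ ⟨i, rfl⟩
      exact ⟨Fin.castLE (by norm_num) i, by fin_cases i <;> simp <;> decide, rfl⟩
  have hx3 : LinearIndependent (ZMod 3) (φ₃ ∘ x) := (H 3 x hxE).1 hx2
  have hcirc : ∀ s, ∑ i ∈ cc s, φ₂ (F s i) = 0 := by
    intro s
    refine circ_sum (φ₂ ∘ F s) s fun C => ?_
    rw [← hInd, h₂]
    have hs : F s '' (C : Set (Fin 4)) ⊆ N.E := by rintro _ ⟨i, _, rfl⟩; exact hE _ _
    rw [and_iff_right hs]
    exact linearIndependent_equiv' (Equiv.Set.imageOfInjOn (F s) C (hFinj s).injOn) rfl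
  have e0 : ∀ s, F s 0 = x 0 := fun s => hFx s 0
  have e1 : ∀ s, F s 1 = x 1 := fun s => hFx s 1
  have e2 : ∀ s, F s 2 = x 2 := fun s => hFx s 2
  have hneg : ∀ a b : ι₂ → ZMod 2, a + b = 0 → b = a := by
    intro a b h
    ext i
    have := congrFun h i
    simp only [Pi.add_apply, Pi.zero_apply] at this
    generalize a i = p at *
    generalize b i = q at *
    revert p q; decide
  have hA : ∀ i, φ₂ (y i) = ∑ j, (fano i j : ZMod 2) • (φ₂ ∘ x) j := by
    have c0 := hcirc 0
    have c1 := hcirc 1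
    have c2 := hcirc 2
    have c3 := hcirc 3
    simp [cc, e0, e1, e2] at c0 c1 c2 c3
    simp only [← add_assoc] at c0 c1 c2 c3
    intro i
    fin_cases i <;> simp [hy, fano, Fin.sum_univ_three]
    · exact hneg _ _ c0
    · exact hneg _ _ c1
    · exact hneg _ _ c2
    · exact hneg _ _ c3
  have hspan : ∀ i, ∃ b : Fin 3 → ZMod 3, ∑ j, b j • (φ₃ ∘ x) j = φ₃ (y i) := by
    intro i
    have hn : ¬ LinearIndependent (ZMod 2) (φ₂ ∘ (Fin.cons (y i) x : Fin 4 → β)) := by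
      rw [Fin.comp_cons, linearIndependent_finCons]
      rintro ⟨_, h⟩
      apply h
      show φ₂ (y i) ∈ _
      rw [hA]
      exact Submodule.sum_mem _ fun j _ => Submodule.smul_mem _ _ (Submodule.subset_span ⟨j, rfl⟩)
    rw [H _ _ (fun j => by refine Fin.cases ?_ ?_ j <;> simp [hyE, hxE]),
      Fin.comp_cons, linearIndependent_finCons] at hn
    have : φ₃ (y i) ∈ Submodule.span (ZMod 3) (range (φ₃ ∘ x)) := by
      by_contra hc; exact hn ⟨hx3, hc⟩
    exact (Submodule.mem_span_range_iff_exists_fun _).1 this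
  choose B hB using hspan
  have hBu : ∀ i (b : Fin 3 → ZMod 3), ∑ j, b j • (φ₃ ∘ x) j = φ₃ (y i) → B i = b := by
    intro i b hb
    apply hx3.fintypeLinearCombination_injective
    simp only [Fintype.linearCombination_apply]
    rw [hB, hb]
  refine no_fano (K := ZMod 3) h23 B (hBu _ _ ?_) (hBu _ _ ?_) (hBu _ _ ?_) ?_
  · simp [hy, Fin.sum_univ_three]
  · simp [hy, Fin.sum_univ_three]
  · simp [hy, Fin.sum_univ_three]
  intro t
  have h := H 3 (y ∘ t) (fun _ => hyE _)
  have ha : φ₂ ∘ y ∘ t = fun i => ∑ j, ((fano ∘ t) i j : ZMod 2) • (φ₂ ∘ x) j :=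
    funext fun i => hA _
  have hb : φ₃ ∘ y ∘ t = fun i => ∑ j, ((B ∘ t) i j : ZMod 3) • (φ₃ ∘ x) j :=
    funext fun i => (hB _).symm
  rw [ha, hb, pullback_span hx2, pullback_span hx3, li_det, li_det] at h
  exact not_iff_not.1 h
end

section
/- Let n be a natural number and let F be a field with at least 2ⁿ elements. Then there is an online matroid morphism from the class of laminar matroids with at most n elements into the complete F-linear matroid of rank n (the matroid on the ground set Fⁿ = (Fin n → F) in which the rank of a set S of vectors is the dimension of its F-linear span). -/
open Set

/-- A family of sets is laminar if any two of its members are disjoint or nested. -/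
def IsLaminarFamily {γ : Type*} (𝒜 : Set (Set γ)) : Prop :=
  ∀ A ∈ 𝒜, ∀ B ∈ 𝒜, A ∩ B = ∅ ∨ A \ B = ∅ ∨ B \ A = ∅

/-- A matroid is laminar if its independent sets are exactly the subsets of the ground set
obeying cardinality constraints over a laminar family of subsets of the ground set. -/
def IsLaminar {γ : Type*} (M : Matroid γ) : Prop :=
  ∃ (𝒜 : Set (Set γ)) (c : Set γ → ℕ), IsLaminarFamily 𝒜 ∧ (∀ A ∈ 𝒜, A ⊆ M.E) ∧
    ∀ I : Set γ, M.Indep I ↔ (I ⊆ M.E ∧ ∀ A ∈ 𝒜, (I ∩ A).encard ≤ (c A : ℕ∞))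

namespace OMM

/-- Laminarity passes to prefixes. -/
lemma isLaminar_prefix {k m : ℕ} (h : k ≤ m) (M : Matroid (Fin m)) (hM : IsLaminar M) :
    IsLaminar (prefixMatroid h M) := by
  obtain ⟨𝒜, c, hl, hE, hI⟩ := hM
  have hinj : Function.Injective (Fin.castLE h) := Fin.castLE_injective h
  refine ⟨(fun A => Fin.castLE h ⁻¹' A) '' 𝒜,
    fun B => sInf (c '' {A | A ∈ 𝒜 ∧ Fin.castLE h ⁻¹' A = B}), ?_, ?_, ?_⟩
  · rintro _ ⟨A, hA, rfl⟩ _ ⟨B, hB, rfl⟩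
    rcases hl A hA B hB with h1 | h1 | h1
    · left; simp only [← preimage_inter, h1, preimage_empty]
    · right; left; simp only [← preimage_sdiff, h1, preimage_empty]
    · right; right; simp only [← preimage_sdiff, h1, preimage_empty]
  · rintro _ ⟨A, hA, rfl⟩
    exact preimage_mono (hE A hA)
  · intro I
    have key : ∀ A : Set (Fin m), (Fin.castLE h '' I ∩ A).encard
        = (I ∩ Fin.castLE h ⁻¹' A).encard := by
      intro A
      rw [← image_inter_preimage, hinj.encard_image]
    unfold prefixMatroid
    rw [Matroid.comap_indep_iff, hI, Matroid.comap_ground_eq, image_subset_iff]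
    constructor
    · rintro ⟨⟨h1, h2⟩, -⟩
      refine ⟨h1, ?_⟩
      rintro _ ⟨A, hA, rfl⟩
      have hne : (c '' {A' | A' ∈ 𝒜 ∧ Fin.castLE h ⁻¹' A' = Fin.castLE h ⁻¹' A}).Nonempty :=
        ⟨c A, A, ⟨hA, rfl⟩, rfl⟩
      obtain ⟨A', ⟨hA', hAA⟩, hc⟩ := Nat.sInf_mem hne
      have := h2 A' hA'
      rw [key, hAA, hc] at this
      exact this
    · rintro ⟨h1, h2⟩
      refine ⟨⟨h1, ?_⟩, hinj.injOn⟩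
      intro A hA
      rw [key]
      refine (h2 _ ⟨A, hA, rfl⟩).trans ?_
      exact Nat.cast_le.2 (Nat.sInf_le ⟨A, ⟨hA, rfl⟩, rfl⟩)

/-- In a laminar matroid every element is either a coloop or is placed freely on a flat
of the deletion. -/
lemma laminar_key {γ : Type*} [Finite γ] (M : Matroid γ) (hE : M.E = univ) (hM : IsLaminar M)
    (e : γ) :
    (∀ S : Set γ, e ∉ S → e ∉ M.closure S) ∨
    ∃ A : Set γ, e ∉ A ∧ ∀ S : Set γ, e ∉ S → (e ∈ M.closure S ↔ A ⊆ M.closure S) := by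
  obtain ⟨𝒜, c, hl, -, hI⟩ := hM
  have span : ∀ A ∈ 𝒜, ∀ J ⊆ A, M.Indep J → J.encard = c A → A ⊆ M.closure J := by
    intro A hA J hJA hJ hc a ha
    rw [hJ.mem_closure_iff']
    refine ⟨by simp [hE], fun hins => by_contra fun haJ => ?_⟩
    have h1 := ((hI _).1 hins).2 A hA
    rw [inter_eq_left.2 (insert_subset ha hJA), encard_insert_of_notMem haJ, hc] at h1
    have h2 : c A + 1 ≤ c A := by exact_mod_cast h1
    omega
  let P : Set (Set γ) := {A | A ∈ 𝒜 ∧ e ∈ A ∧ ∃ J ⊆ A, e ∉ J ∧ M.Indep J ∧ J.encard = c A}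
  have find : ∀ S : Set γ, e ∉ S → e ∈ M.closure S → ∃ A ∈ P, A ⊆ M.closure S := by
    intro S heS he
    obtain ⟨I, hIS⟩ := M.exists_isBasis S (by simp [hE])
    have heI : e ∉ I := fun h => heS (hIS.subset h)
    rw [← hIS.closure_eq_closure] at he
    have hdep := ((hIS.indep.mem_closure_iff_of_notMem heI).1 he).not_indep
    rw [hI] at hdep
    simp only [hE, subset_univ, true_and, not_forall, not_le] at hdep
    obtain ⟨A, hA, hlt⟩ := hdep
    have hle := ((hI I).1 hIS.indep).2 A hA
    have heA : e ∈ A := by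
      by_contra hn
      rw [insert_inter_of_notMem hn] at hlt
      exact absurd hle (not_le.2 hlt)
    rw [insert_inter_of_mem heA, encard_insert_of_notMem (fun h => heI h.1)] at hlt
    have hJ : (I ∩ A).encard = c A := le_antisymm hle (Order.le_of_lt_add_one hlt)
    have hJi : M.Indep (I ∩ A) := hIS.indep.subset inter_subset_left
    refine ⟨A, ⟨hA, heA, I ∩ A, inter_subset_right, fun h => heI h.1, hJi, hJ⟩, ?_⟩
    refine (span A hA _ inter_subset_right hJi hJ).trans ?_
    exact M.closure_subset_closure (inter_subset_left.trans hIS.subset)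
  by_cases hP : P.Nonempty
  · right
    obtain ⟨A0, hA0⟩ := (Set.toFinite P).exists_minimal hP
    have hmin : ∀ A ∈ P, A0 ⊆ A := by
      intro A hA
      rcases hl A0 hA0.prop.1 A hA.1 with h1 | h1 | h1
      · exact absurd (show e ∈ A0 ∩ A from ⟨hA0.prop.2.1, hA.2.1⟩) (by simp [h1])
      · exact sdiff_eq_empty.1 h1
      · exact hA0.le_of_le hA (sdiff_eq_empty.1 h1)
    refine ⟨A0 \ {e}, by simp, fun S heS => ⟨fun he => ?_, fun hsub => ?_⟩⟩
    · obtain ⟨A, hA, hAS⟩ := find S heS he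
      exact sdiff_subset.trans ((hmin A hA).trans hAS)
    · obtain ⟨hA, heA, J, hJA, heJ, hJ, hc⟩ := hA0.prop
      have h1 : J ⊆ M.closure S := fun x hx =>
        hsub ⟨hJA hx, fun hxe => heJ (by rw [← mem_singleton_iff.1 hxe]; exact hx)⟩
      exact M.closure_subset_closure_of_subset_closure h1 (span A0 hA J hJA hJ hc heA)
  · left
    intro S heS he
    obtain ⟨A, hA, -⟩ := find S heS he
    exact hP ⟨A, hA⟩

/-- A subspace is not covered by few subspaces not containing it. -/
lemma exists_avoid {F V ι : Type*} [Field F] [AddCommGroup V] [Module F V] (N : ℕ)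
    (hN : ∀ T : Finset F, T.card ≤ N → ∃ t, t ∉ T) (W : Submodule F V) (U : ι → Submodule F V)
    (s : Finset ι) (hs : s.card ≤ N) (hU : ∀ i ∈ s, ¬ W ≤ U i) :
    ∃ w ∈ W, ∀ i ∈ s, w ∉ U i := by
  classical
  induction s using Finset.induction_on with
  | empty => exact ⟨0, W.zero_mem, by simp⟩
  | insert a s ha ih =>
    have hcard : s.card ≤ N := (Finset.card_le_card (Finset.subset_insert a s)).trans hs
    obtain ⟨w, hw, hws⟩ := ih hcard (fun i hi => hU i (Finset.mem_insert_of_mem hi))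
    by_cases hwa : w ∈ U a
    · obtain ⟨u, hu, hua⟩ := SetLike.not_le_iff_exists.1 (hU a (Finset.mem_insert_self a s))
      let bad : ι → F := fun i => if h : ∃ t : F, u + t • w ∈ U i then h.choose else 0
      obtain ⟨t, ht⟩ := hN (s.image bad) (Finset.card_image_le.trans hcard)
      refine ⟨u + t • w, W.add_mem hu (W.smul_mem t hw), ?_⟩
      intro i hi hmem
      rcases Finset.mem_insert.1 hi with rfl | hi
      · exact hua (by simpa using (U i).sub_mem hmem ((U i).smul_mem t hwa))
      · have hex : ∃ t : F, u + t • w ∈ U i := ⟨t, hmem⟩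
        have hb : u + bad i • w ∈ U i := by
          simp only [bad, dif_pos hex]; exact hex.choose_spec
        have hne : t - bad i ≠ 0 := by
          intro h0
          exact ht (Finset.mem_image.2 ⟨i, hi, (sub_eq_zero.1 h0).symm⟩)
        have hd : (t - bad i) • w ∈ U i := by
          have := (U i).sub_mem hmem hb
          rwa [add_sub_add_left_eq_sub, ← sub_smul] at this
        exact hws i hi (((U i).smul_mem_iff hne).1 hd)
    · refine ⟨w, hw, fun i hi => ?_⟩
      rcases Finset.mem_insert.1 hi with rfl | hi
      · exact hwa
      · exact hws i hi

/-- `v` represents `M`. -/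
def Rep (F : Type*) [Field F] {V γ : Type*} [AddCommGroup V] [Module F V] (M : Matroid γ)
    (v : γ → V) : Prop := ∀ I : Set γ, M.Indep I ↔ LinearIndepOn F v I

lemma Rep.closure {F V γ : Type*} [Field F] [AddCommGroup V] [Module F V] {M : Matroid γ}
    {v : γ → V} (h : Rep F M v) (hE : M.E = univ) (S : Set γ) (a : γ) :
    a ∈ M.closure S ↔ v a ∈ Submodule.span F (v '' S) := by
  obtain ⟨I, hI⟩ := M.exists_isBasis S (by simp [hE])
  have key : ∀ b, b ∈ M.closure I ↔ v b ∈ Submodule.span F (v '' I) := by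
    intro b
    rw [hI.indep.mem_closure_iff', ((h I).1 hI.indep).mem_span_iff, h]
    simp [hE]
  have hs : Submodule.span F (v '' I) = Submodule.span F (v '' S) := by
    refine le_antisymm (Submodule.span_mono (image_mono hI.subset)) (Submodule.span_le.2 ?_)
    rintro _ ⟨b, hb, rfl⟩
    exact (key b).1 (hI.subset_closure hb)
  rw [← hI.closure_eq_closure, key, hs]

lemma Rep.rank {F V γ : Type*} [Field F] [AddCommGroup V] [Module F V] [Module.Finite F V]
    [Finite γ] {M : Matroid γ} {v : γ → V} (h : Rep F M v) (S : Set γ) :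
    (spanRank F (v '' S) : ℕ∞) = mRank M S := by
  have fin : ∀ I : Set γ, LinearIndepOn F v I →
      (Module.finrank F (Submodule.span F (v '' I)) : ℕ∞) = I.encard := by
    intro I hI
    have := Fintype.ofFinite I
    rw [image_eq_range, finrank_span_eq_card hI, ← Nat.card_eq_fintype_card,
      Nat.card_coe_set_eq, (Set.toFinite I).cast_ncard_eq]
  unfold mRank spanRank
  apply le_antisymm
  · obtain ⟨b, hb, -, hsp, hli⟩ := exists_linearIndepOn_extension
      (linearIndepOn_empty F v) (empty_subset S)
    have hs : Submodule.span F (v '' b) = Submodule.span F (v '' S) :=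
      le_antisymm (Submodule.span_mono (image_mono hb)) (Submodule.span_le.2 hsp)
    rw [← hs, fin b hli]
    exact le_iSup₂_of_le b ⟨(h b).2 hli, hb⟩ le_rfl
  · refine iSup₂_le ?_
    rintro I ⟨hI, hIS⟩
    rw [← fin I ((h I).1 hI)]
    exact_mod_cast Submodule.finrank_mono (Submodule.span_mono (image_mono hIS))

/-- The requirement on the vector assigned to the last element. -/
def Good (F : Type*) [Field F] {V : Type*} [AddCommGroup V] [Module F V] {m : ℕ}
    (M : Matroid (Fin (m + 1))) (v : Fin m → V) (w : V) : Prop :=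
  ∀ S : Set (Fin m), Fin.last m ∈ M.closure (Fin.castSucc '' S) ↔ w ∈ Submodule.span F (v '' S)

lemma last_notMem {m : ℕ} (S : Set (Fin m)) : Fin.last m ∉ Fin.castSucc '' S := by
  rintro ⟨x, -, hx⟩
  exact Fin.castSucc_ne_last x hx

lemma rep_snoc {F V : Type*} [Field F] [AddCommGroup V] [Module F V] {m : ℕ}
    (M : Matroid (Fin (m + 1))) (hE : M.E = univ) (v : Fin m → V) (w : V)
    (hv : Rep F (prefixMatroid (Nat.le_succ m) M) v) (hw : Good F M v w) :
    Rep F M (Fin.snoc v w : Fin (m + 1) → V) := by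
  have him : ∀ S : Set (Fin m), (Fin.snoc v w : Fin (m + 1) → V) '' (Fin.castSucc '' S)
      = v '' S := by
    intro S
    rw [image_image]
    simp
  have h1 : ∀ S : Set (Fin m), M.Indep (Fin.castSucc '' S) ↔
      LinearIndepOn F (Fin.snoc v w : Fin (m + 1) → V) (Fin.castSucc '' S) := by
    intro S
    have h2 := hv S
    unfold prefixMatroid at h2
    rw [Matroid.comap_indep_iff, and_iff_left (Fin.castLE_injective _).injOn] at h2
    refine h2.trans ?_
    have hc : v = (Fin.snoc v w : Fin (m + 1) → V) ∘ Fin.castSucc := by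
      ext x; simp
    constructor
    · intro h
      rw [hc] at h
      exact h.image_of_comp
    · intro h
      have h3 : LinearIndepOn F ((Fin.snoc v w : Fin (m + 1) → V) ∘ Fin.castSucc) S :=
        h.comp_of_image (Fin.castSucc_injective m).injOn
      rwa [← hc] at h3
  intro I
  have hS : ∀ J : Set (Fin (m + 1)), Fin.last m ∉ J →
      Fin.castSucc '' (Fin.castSucc ⁻¹' J) = J := by
    intro J hJ
    rw [image_preimage_eq_iff]
    intro x hx
    have hxl : x ≠ Fin.last m := fun h => hJ (h ▸ hx)
    exact ⟨x.castPred hxl, by simp⟩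
  by_cases hl : Fin.last m ∈ I
  · set S : Set (Fin m) := Fin.castSucc ⁻¹' (I \ {Fin.last m}) with hSdef
    have hI : I = insert (Fin.last m) (Fin.castSucc '' S) := by
      rw [hSdef, hS _ (by simp)]; simp [hl]
    rw [hI, Matroid.insert_indep_iff, linearIndepOn_insert (last_notMem S), him, h1 S,
      Fin.snoc_last, ← hw S]
    simp [hE]
  · rw [← hS I hl]; exact h1 _

lemma exists_good {F V : Type*} [Field F] [AddCommGroup V] [Module F V] [Module.Finite F V]
    {m : ℕ} (hN : ∀ T : Finset F, T.card ≤ 2 ^ m → ∃ t, t ∉ T) (hm : m < Module.finrank F V)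
    (M : Matroid (Fin (m + 1))) (hE : M.E = univ) (hM : IsLaminar M) (v : Fin m → V)
    (hv : Rep F (prefixMatroid (Nat.le_succ m) M) v) : ∃ w, Good F M v w := by
  classical
  have hcl : ∀ (S : Set (Fin m)) (a : Fin m), a.castSucc ∈ M.closure (Fin.castSucc '' S) ↔
      v a ∈ Submodule.span F (v '' S) := by
    intro S a
    rw [← hv.closure (by simp [prefixMatroid, hE]) S a]
    unfold prefixMatroid
    rw [Matroid.comap_closure_eq]
    rfl
  rcases laminar_key M hE hM (Fin.last m) with hco | ⟨A, heA, hA⟩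
  · have hne : Submodule.span F (range v) ≠ ⊤ := by
      intro h
      have := finrank_range_le_card (R := F) v
      rw [Set.finrank, h, finrank_top, Fintype.card_fin] at this
      omega
    obtain ⟨w, -, hw⟩ := SetLike.exists_of_lt hne.lt_top
    refine ⟨w, fun S => iff_of_false (hco _ (last_notMem S)) fun h => hw ?_⟩
    exact Submodule.span_mono (image_subset_range v S) h
  · let B : Set (Fin m) := Fin.castSucc ⁻¹' A
    have hB : ∀ S : Set (Fin m), Fin.last m ∈ M.closure (Fin.castSucc '' S) ↔
        Submodule.span F (v '' B) ≤ Submodule.span F (v '' S) := by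
      intro S
      rw [hA _ (last_notMem S), Submodule.span_le]
      constructor
      · rintro h _ ⟨b, hb, rfl⟩
        exact (hcl S b).1 (h hb)
      · intro h x hx
        have hxl : x ≠ Fin.last m := fun h => heA (h ▸ hx)
        have hx' : (x.castPred hxl).castSucc = x := by simp
        rw [← hx', hcl]
        exact h ⟨_, by simpa [B] using hx, rfl⟩
    obtain ⟨w, hwB, hw⟩ := exists_avoid (2 ^ m) hN (Submodule.span F (v '' B))
      (fun S : Set (Fin m) => Submodule.span F (v '' S))
      (Finset.univ.filter fun S => ¬ Submodule.span F (v '' B) ≤ Submodule.span F (v '' S))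
      ((Finset.card_filter_le _ _).trans (by simp)) (by simp)
    refine ⟨w, fun S => ?_⟩
    rw [hB]
    refine ⟨fun h => h hwB, fun h => by_contra fun hn => ?_⟩
    exact hw S (by simpa using hn) h

open Classical in
/-- The online assignment. -/
noncomputable def assign (F V : Type*) [Field F] [AddCommGroup V] [Module F V] :
    (m : ℕ) → Matroid (Fin m) → (Fin m → V)
  | 0, _ => fun _ => 0
  | m + 1, M =>
    Fin.snoc (assign F V m (prefixMatroid (Nat.le_succ m) M))
      (if h : ∃ w, Good F M (assign F V m (prefixMatroid (Nat.le_succ m) M)) w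
        then h.choose else 0)

lemma assign_prefix (F V : Type*) [Field F] [AddCommGroup V] [Module F V] (k m : ℕ) (h : k ≤ m)
    (M : Matroid (Fin m)) (i : Fin k) :
    assign F V k (prefixMatroid h M) i = assign F V m M (Fin.castLE h i) := by
  induction m with
  | zero => obtain rfl : k = 0 := by omega
            exact i.elim0
  | succ m ih =>
    rcases Nat.lt_or_ge m k with hk | hk
    · obtain rfl : k = m + 1 := by omega
      have : prefixMatroid h M = M := M.comap_id
      rw [this]
      rfl
    · have h1 := ih hk (prefixMatroid (Nat.le_succ m) M)
      have h2 : prefixMatroid hk (prefixMatroid (Nat.le_succ m) M) = prefixMatroid h M := by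
        refine Matroid.ext_indep rfl fun I _ => ?_
        simp only [prefixMatroid, Matroid.comap_indep_iff, (Fin.castLE_injective _).injOn,
          and_true, image_image]
        rfl
      rw [h2] at h1
      rw [h1]
      have h3 : Fin.castLE h i = (Fin.castLE hk i).castSucc := rfl
      rw [h3, assign, Fin.snoc_castSucc]

lemma assign_rep {F V : Type*} [Field F] [AddCommGroup V] [Module F V] [Module.Finite F V]
    (n : ℕ) (hV : Module.finrank F V = n)
    (hF : ∀ T : Finset F, T.card < 2 ^ n → ∃ t, t ∉ T) (m : ℕ) (hm : m ≤ n)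
    (M : Matroid (Fin m)) (hE : M.E = univ) (hM : IsLaminar M) : Rep F M (assign F V m M) := by
  induction m with
  | zero =>
    intro I
    obtain rfl : I = ∅ := Set.eq_empty_of_isEmpty I
    simp
  | succ m ih =>
    have hv := ih (by omega) (prefixMatroid (Nat.le_succ m) M) (by simp [prefixMatroid, hE])
      (isLaminar_prefix _ M hM)
    have hg := exists_good (fun T hT => hF T (hT.trans_lt (Nat.pow_lt_pow_right (by omega) hm)))
      (by omega) M hE hM _ hv
    rw [assign, dif_pos hg]
    exact rep_snoc M hE _ _ hv hg.choose_spec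

end OMM

/-- Let `F` be a field with at least `2ⁿ` elements.  There is an online matroid morphism from
the class of laminar matroids with at most `n` elements into the complete `F`-linear matroid
of rank `n` (the matroid on `Fⁿ` in which the rank of a set of vectors is the dimension of
its `F`-linear span). -/
theorem stmt15 (n : ℕ) (F : Type*) [Field F]
    (hF : ((2 ^ n : ℕ) : Cardinal) ≤ Cardinal.mk F) :
    ∃ f : (m : ℕ) → Matroid (Fin m) → (Fin m → (Fin n → F)),
      (∀ m, m ≤ n → ∀ M : Matroid (Fin m), M.E = univ → IsLaminar M →
        ∀ S : Set (Fin m), (spanRank F (f m M '' S) : ℕ∞) = mRank M S) ∧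
      (∀ k m (hkm : k ≤ m), m ≤ n → ∀ M : Matroid (Fin m), M.E = univ → IsLaminar M →
        ∀ i : Fin k, f k (prefixMatroid hkm M) i = f m M (Fin.castLE hkm i)) := by
  refine ⟨OMM.assign F (Fin n → F), ?_, ?_⟩
  · intro m hm M hE hM S
    refine (OMM.assign_rep n (by simp) ?_ m hm M hE hM).rank S
    intro T hT
    by_contra! hall
    have h1 : Cardinal.mk F ≤ T.card := by
      rw [← Cardinal.mk_univ, ← Cardinal.mk_coe_finset]
      exact Cardinal.mk_le_mk_of_subset fun t _ => hall t
    exact absurd (Nat.cast_le.1 (hF.trans h1)) (not_le.2 hT)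
  · intro k m hkm _ M _ _ i
    exact OMM.assign_prefix F _ k m hkm M i
end

section
/- For n ≥ 1 and an ordered basis b = (b₁, …, bₙ) of 𝔽₂ⁿ = (Fin n → ZMod 2), define f_b on nonzero vectors by: writing x uniquely as x = Σ_{i ∈ T} b_i with T a nonempty subset of {1,…,n}, set f_b(x) = min T. Then there is an absolute constant c (one may take c = 3) such that for every n ≥ 1 and every nonempty set S of nonzero vectors of 𝔽₂ⁿ of rank r (r = the dimension of the 𝔽₂-linear span of S), the average over all ordered bases b of 𝔽₂ⁿ (chosen uniformly from the finite set of ordered bases) of the number of distinct values of f_b on S is at least (1 − 1/e)·log₂(r) − c. -/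
open Set

/-- The finite set of ordered bases of `𝔽₂ⁿ`: the linearly independent `n`-tuples of
vectors. -/
noncomputable def orderedBases (n : ℕ) : Finset (Fin n → (Fin n → ZMod 2)) :=
  (Set.toFinite {b : Fin n → (Fin n → ZMod 2) |
    LinearIndependent (ZMod 2) b}).toFinset

/-- Second-moment counting: a uniform two-design hits `s` most of the time. -/
lemma secondMoment {β V : Type*} [Fintype V] [DecidableEq V] (W : Finset V)
    (B : Finset β) (hB : B.Nonempty) (A : β → Finset V) (m a a2 : ℕ) (hm : 0 < m)
    (hA : ∀ b ∈ B, (A b).card = m) (hAW : ∀ b ∈ B, A b ⊆ W)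
    (h1 : ∀ x ∈ W, (B.filter (fun b => x ∈ A b)).card = a)
    (h2 : ∀ x ∈ W, ∀ y ∈ W, x ≠ y → (B.filter (fun b => x ∈ A b ∧ y ∈ A b)).card = a2)
    (s : Finset V) (hs : s ⊆ W) (hsn : s.Nonempty) :
    ((B.filter (fun b => s ∩ A b = ∅)).card : ℝ) * (s.card * m) ≤ B.card * W.card := by
  -- sums for arbitrary subsets of W
  have key1 : ∀ t ⊆ W, ∑ b ∈ B, (t ∩ A b).card = t.card * a := by
    intro t ht
    calc ∑ b ∈ B, (t ∩ A b).card = ∑ b ∈ B, ∑ x ∈ t, if x ∈ A b then 1 else 0 := by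
          refine Finset.sum_congr rfl fun b _ => ?_
          rw [← Finset.card_filter, Finset.filter_mem_eq_inter]
      _ = ∑ x ∈ t, a := by
          rw [Finset.sum_comm]
          refine Finset.sum_congr rfl fun x hx => ?_
          rw [← Finset.card_filter, h1 x (ht hx)]
      _ = _ := by simp
  have key2 : ∀ t ⊆ W, ∑ b ∈ B, (t ∩ A b).offDiag.card = t.offDiag.card * a2 := by
    intro t ht
    calc ∑ b ∈ B, (t ∩ A b).offDiag.card
          = ∑ b ∈ B, ∑ p ∈ t.offDiag, if p.1 ∈ A b ∧ p.2 ∈ A b then 1 else 0 := by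
          refine Finset.sum_congr rfl fun b _ => ?_
          rw [← Finset.card_filter]
          congr 1
          ext p
          simp only [Finset.mem_offDiag, Finset.mem_inter, Finset.mem_filter]
          tauto
      _ = ∑ x ∈ t.offDiag, a2 := by
          rw [Finset.sum_comm]
          refine Finset.sum_congr rfl fun p hp => ?_
          rw [Finset.mem_offDiag] at hp
          rw [← Finset.card_filter, h2 _ (ht hp.1) _ (ht hp.2.1) hp.2.2]
      _ = _ := by simp
  have offR : ∀ t : Finset V, (t.offDiag.card : ℝ) = t.card * t.card - t.card := by
    intro t
    rw [Finset.offDiag_card, Nat.cast_sub (Nat.le_mul_self _)]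
    push_cast; rfl
  have key1R : ∀ t ⊆ W, ∑ b ∈ B, ((t ∩ A b).card : ℝ) = t.card * a := by
    intro t ht; exact_mod_cast key1 t ht
  have key2R : ∀ t ⊆ W, ∑ b ∈ B, (((t ∩ A b).card : ℝ) * (t ∩ A b).card - (t ∩ A b).card)
      = (t.card * t.card - t.card) * a2 := by
    intro t ht
    rw [← offR, ← Nat.cast_mul, ← key2 t ht, Nat.cast_sum]
    exact Finset.sum_congr rfl fun b _ => (offR _).symm
  obtain ⟨b0, hb0⟩ := hB
  have hmW : m ≤ W.card := by
    rw [← hA b0 hb0]; exact Finset.card_le_card (hAW b0 hb0)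
  have hWA : ∀ b ∈ B, ((W ∩ A b).card : ℝ) = m := by
    intro b hb
    rw [Finset.inter_eq_right.mpr (hAW b hb), hA b hb]
  have e1 : (B.card : ℝ) * m = W.card * a := by
    rw [← key1R W subset_rfl, Finset.sum_congr rfl hWA]; simp
  have e2 : (B.card : ℝ) * (m * m - m) = (W.card * W.card - W.card) * a2 := by
    rw [← key2R W subset_rfl, Finset.sum_congr rfl fun b hb => by rw [hWA b hb]]; simp [mul_sub]
  have s1 := key1R s hs
  have s2 := key2R s hs
  have hsW : s.card ≤ W.card := Finset.card_le_card hs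
  have hs0 : 0 < s.card := hsn.card_pos
  set N : ℝ := (W.card : ℝ) with hN
  set r : ℝ := (s.card : ℝ) with hr
  set Bc : ℝ := (B.card : ℝ) with hBc
  have hmR : (0 : ℝ) < m := by exact_mod_cast hm
  have hmN : (m : ℝ) ≤ N := by
    rw [hN]; exact_mod_cast hmW
  have hNpos : 0 < N := lt_of_lt_of_le hmR hmN
  have hrpos : 0 < r := by
    rw [hr]; exact_mod_cast hs0
  have hr1 : 1 ≤ r := by
    rw [hr]; exact_mod_cast hs0
  have hBc0 : 0 ≤ Bc := by positivity
  have ha2 : (0 : ℝ) ≤ a2 := by positivity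
  set μ : ℝ := r * m / N with hμ
  have hμpos : 0 < μ := by positivity
  have hra : r * a = Bc * μ := by
    rw [hμ]; field_simp; linarith
  have hpair : (r * r - r) * a2 ≤ Bc * μ ^ 2 := by
    by_cases hc : s.card = 1
    · have : r = 1 := by rw [hr, hc]; simp
      rw [this]; nlinarith [mul_nonneg hBc0 (sq_nonneg μ)]
    · have hN2 : (2 : ℝ) ≤ N := by
        have : 2 ≤ W.card := by omega
        rw [hN]; exact_mod_cast this
      have hb : (a2 : ℝ) * N ^ 2 ≤ Bc * m ^ 2 := by
        have h : ((a2 : ℝ) * N ^ 2) * (N - 1) ≤ (Bc * m ^ 2) * (N - 1) := by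
          have e : ((a2 : ℝ) * N ^ 2) * (N - 1) = Bc * (m * m - m) * N := by
            rw [e2]; ring
          rw [e]
          have : 0 ≤ Bc * m * (N - m) :=
            mul_nonneg (mul_nonneg hBc0 hmR.le) (by linarith)
          nlinarith
        exact le_of_mul_le_mul_right h (by linarith)
      have e : Bc * μ ^ 2 = r ^ 2 * (Bc * m ^ 2) / N ^ 2 := by
        rw [hμ]; field_simp
      rw [e, le_div_iff₀ (by positivity)]
      calc (r * r - r) * a2 * N ^ 2 ≤ r ^ 2 * (a2 * N ^ 2) := by
            have : 0 ≤ r * (a2 * N ^ 2) := by positivity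
            nlinarith
        _ ≤ _ := by gcongr
  have var : ∑ b ∈ B, (((s ∩ A b).card : ℝ) - μ) ^ 2 ≤ Bc * μ := by
    have : ∑ b ∈ B, (((s ∩ A b).card : ℝ) - μ) ^ 2
        = ∑ b ∈ B, (((s ∩ A b).card : ℝ) * (s ∩ A b).card - (s ∩ A b).card)
          + (1 - 2 * μ) * ∑ b ∈ B, ((s ∩ A b).card : ℝ) + Bc * μ ^ 2 := by
      rw [Finset.mul_sum, hBc, ← nsmul_eq_mul, ← Finset.sum_const, ← Finset.sum_add_distrib, ← Finset.sum_add_distrib]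
      exact Finset.sum_congr rfl fun b _ => by ring
    rw [this, s1, s2, hra]
    nlinarith
  have low : ((B.filter (fun b => s ∩ A b = ∅)).card : ℝ) * μ ^ 2
      ≤ ∑ b ∈ B, (((s ∩ A b).card : ℝ) - μ) ^ 2 := by
    rw [← nsmul_eq_mul, ← Finset.sum_const]
    calc ∑ b ∈ B.filter (fun b => s ∩ A b = ∅), μ ^ 2
        = ∑ b ∈ B.filter (fun b => s ∩ A b = ∅), (((s ∩ A b).card : ℝ) - μ) ^ 2 := by
          refine Finset.sum_congr rfl fun b hb => ?_
          rw [(Finset.mem_filter.mp hb).2]; simp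
      _ ≤ _ := Finset.sum_le_sum_of_subset_of_nonneg (Finset.filter_subset _ _) fun _ _ _ => sq_nonneg _
  have fin : ((B.filter (fun b => s ∩ A b = ∅)).card : ℝ) * μ ≤ Bc := by
    have := low.trans var
    refine le_of_mul_le_mul_right ?_ hμpos
    calc _ = ((B.filter (fun b => s ∩ A b = ∅)).card : ℝ) * μ ^ 2 := by ring
      _ ≤ _ := this
  rw [hμ, mul_div_assoc', div_le_iff₀ hNpos] at fin
  exact fin

/-- The general linear group is transitive on linearly independent families. -/
lemma exists_equiv_of_li {K V ι : Type*} [Field K] [AddCommGroup V] [Module K V] [Finite ι]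
    {v w : ι → V} (hv : LinearIndependent K v) (hw : LinearIndependent K w) :
    ∃ g : V ≃ₗ[K] V, ∀ i, g (v i) = w i := by
  have q {u : ι → V} (hu : LinearIndependent K u) (i : ι) :
    (hu.linearCombinationEquiv (Finsupp.single i 1) : V) = u i := by simp
  let f := hv.linearCombinationEquiv.symm ≪≫ₗ hw.linearCombinationEquiv
  have : FiniteDimensional K (Submodule.span K (Set.range v)) :=
    FiniteDimensional.span_of_finite K (Set.finite_range _)
  obtain ⟨g, hg⟩ := Submodule.exists_linearEquiv_restrict_eq f
  refine ⟨g, fun i => ?_⟩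
  rw [← q hv, ← hg, ← q hw]
  simp [f]

lemma li_pair {n : ℕ} {x y : Fin n → ZMod 2} (hx : x ≠ 0) (hy : y ≠ 0) (hxy : x ≠ y) :
    LinearIndependent (ZMod 2) ![x, y] := by
  rw [LinearIndependent.pair_iff' hx]
  intro a
  fin_cases a
  · change (0 : ZMod 2) • x ≠ y
    simpa using hy.symm
  · change (1 : ZMod 2) • x ≠ y
    simpa using hxy

/-- Vectors whose least index in the `b`-expansion is `i`. -/
noncomputable def leadSet {n : ℕ} (i : Fin n) (b : Fin n → (Fin n → ZMod 2)) :
    Finset (Fin n → ZMod 2) := by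
  classical
  exact ((Finset.Ioi i).powerset).image (fun T => ∑ j ∈ insert i T, b j)

lemma mem_leadSet {n : ℕ} (i : Fin n) (b : Fin n → (Fin n → ZMod 2)) (x : Fin n → ZMod 2) :
    x ∈ leadSet i b ↔ ∃ T : Finset (Fin n), (i ∈ T ∧ ∀ j ∈ T, i ≤ j) ∧ x = ∑ j ∈ T, b j := by
  classical
  simp only [leadSet, Finset.mem_image, Finset.mem_powerset]
  constructor
  · rintro ⟨T, hT, rfl⟩
    refine ⟨insert i T, ⟨by simp, ?_⟩, rfl⟩
    intro j hj
    rcases Finset.mem_insert.mp hj with rfl | hj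
    · exact le_rfl
    · exact (Finset.mem_Ioi.mp (hT hj)).le
  · rintro ⟨T, ⟨hi, hT⟩, rfl⟩
    refine ⟨T.erase i, ?_, by rw [Finset.insert_erase hi]⟩
    intro j hj
    rw [Finset.mem_erase] at hj
    exact Finset.mem_Ioi.mpr (lt_of_le_of_ne (hT j hj.2) (Ne.symm hj.1))

lemma sum_inj {n : ℕ} {b : Fin n → (Fin n → ZMod 2)} (hb : LinearIndependent (ZMod 2) b)
    {T U : Finset (Fin n)} (h : ∑ j ∈ T, b j = ∑ j ∈ U, b j) : T = U := by
  classical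
  rw [linearIndependent_iff_injective_fintypeLinearCombination] at hb
  have := @hb (fun j => if j ∈ T then 1 else 0) (fun j => if j ∈ U then 1 else 0)
    (by simpa [Fintype.linearCombination_apply] using h)
  ext j
  have hj := congrFun this j
  by_cases h1 : j ∈ T <;> by_cases h2 : j ∈ U <;> simp [h1, h2] at hj ⊢

lemma card_leadSet {n : ℕ} (i : Fin n) {b : Fin n → (Fin n → ZMod 2)}
    (hb : LinearIndependent (ZMod 2) b) : (leadSet i b).card = 2 ^ (n - 1 - i) := by
  classical
  rw [leadSet, Finset.card_image_of_injOn, Finset.card_powerset, Fin.card_Ioi]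
  intro T hT U hU h
  have h := sum_inj hb h
  have hT' : i ∉ T := fun h => by simpa using (Finset.mem_powerset.mp hT) h
  have hU' : i ∉ U := fun h => by simpa using (Finset.mem_powerset.mp hU) h
  rw [← Finset.erase_insert hT', h, Finset.erase_insert hU']

lemma zero_notMem_leadSet {n : ℕ} (i : Fin n) {b : Fin n → (Fin n → ZMod 2)}
    (hb : LinearIndependent (ZMod 2) b) : (0 : Fin n → ZMod 2) ∉ leadSet i b := by
  rw [mem_leadSet]
  rintro ⟨T, ⟨hi, -⟩, h⟩
  have : (∅ : Finset (Fin n)) = T := sum_inj hb (by simpa using h)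
  simp [← this] at hi

lemma mem_orderedBases {n : ℕ} (b : Fin n → (Fin n → ZMod 2)) :
    b ∈ orderedBases n ↔ LinearIndependent (ZMod 2) b := by
  simp [orderedBases]

lemma leadSet_equiv {n : ℕ} (i : Fin n) (b : Fin n → (Fin n → ZMod 2)) (x : Fin n → ZMod 2)
    (g : (Fin n → ZMod 2) ≃ₗ[ZMod 2] (Fin n → ZMod 2)) :
    g x ∈ leadSet i (fun j => g (b j)) ↔ x ∈ leadSet i b := by
  simp only [mem_leadSet, ← map_sum, g.injective.eq_iff]

lemma equiv_li {n : ℕ} (b : Fin n → (Fin n → ZMod 2))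
    (g : (Fin n → ZMod 2) ≃ₗ[ZMod 2] (Fin n → ZMod 2)) :
    LinearIndependent (ZMod 2) (fun j => g (b j)) ↔ LinearIndependent (ZMod 2) b :=
  g.toLinearMap.linearIndependent_iff g.ker

lemma count_inv {n : ℕ} (i : Fin n) (x y : Fin n → ZMod 2)
    (g : (Fin n → ZMod 2) ≃ₗ[ZMod 2] (Fin n → ZMod 2)) :
    ((orderedBases n).filter (fun b => x ∈ leadSet i b ∧ y ∈ leadSet i b)).card =
    ((orderedBases n).filter (fun b => g x ∈ leadSet i b ∧ g y ∈ leadSet i b)).card := by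
  refine Finset.card_bij (fun b _ j => g (b j)) ?_ ?_ ?_
  · intro b hb
    simpa only [Finset.mem_filter, mem_orderedBases, leadSet_equiv, equiv_li] using hb
  · intro b _ c _ h
    funext j
    exact g.injective (congrFun h j)
  · intro c hc
    have e : (fun j => g (g.symm (c j))) = c := by simp
    refine ⟨fun j => g.symm (c j), ?_, e⟩
    rw [← e] at hc
    simpa only [Finset.mem_filter, mem_orderedBases, leadSet_equiv, equiv_li] using hc

lemma orderedBases_nonempty (n : ℕ) : (orderedBases n).Nonempty :=
  ⟨_, (mem_orderedBases _).mpr (Pi.basisFun (ZMod 2) (Fin n)).linearIndependent⟩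

open Classical in
lemma miss_bound {n : ℕ} (i : Fin n) (s : Finset (Fin n → ZMod 2)) (hs : ∀ x ∈ s, x ≠ 0)
    (hsn : s.Nonempty) :
    (((orderedBases n).filter (fun b => s ∩ leadSet i b = ∅)).card : ℝ) * s.card
      ≤ (orderedBases n).card * 2 ^ ((i : ℕ) + 1) := by
  have H1 : ∃ a, ∀ x : Fin n → ZMod 2, x ≠ 0 →
      ((orderedBases n).filter (fun b => x ∈ leadSet i b)).card = a := by
    obtain ⟨x0, hx0⟩ := hsn
    refine ⟨((orderedBases n).filter (fun b => x0 ∈ leadSet i b)).card, fun x hx => ?_⟩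
    obtain ⟨g, hg⟩ := exists_equiv_of_li (K := ZMod 2) (v := fun _ : Unit => x)
      (w := fun _ : Unit => x0) (LinearIndependent.of_subsingleton () hx)
      (LinearIndependent.of_subsingleton () (hs x0 hx0))
    simpa [hg ()] using count_inv i x x g
  have H2 : ∃ a, ∀ x : Fin n → ZMod 2, x ≠ 0 → ∀ y : Fin n → ZMod 2, y ≠ 0 → x ≠ y →
      ((orderedBases n).filter (fun b => x ∈ leadSet i b ∧ y ∈ leadSet i b)).card = a := by
    by_cases h : ∃ x0 y0 : Fin n → ZMod 2, x0 ≠ 0 ∧ y0 ≠ 0 ∧ x0 ≠ y0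
    · obtain ⟨x0, y0, hx0, hy0, hxy0⟩ := h
      refine ⟨((orderedBases n).filter (fun b => x0 ∈ leadSet i b ∧ y0 ∈ leadSet i b)).card,
        fun x hx y hy hxy => ?_⟩
      obtain ⟨g, hg⟩ := exists_equiv_of_li (li_pair hx hy hxy) (li_pair hx0 hy0 hxy0)
      have g0 : g x = x0 := hg 0
      have g1 : g y = y0 := hg 1
      simpa only [g0, g1] using count_inv i x y g
    · exact ⟨0, fun x hx y hy hxy => (h ⟨x, y, hx, hy, hxy⟩).elim⟩
  obtain ⟨a, ha⟩ := H1
  obtain ⟨a2, ha2⟩ := H2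
  have main := secondMoment (Finset.univ.erase (0 : Fin n → ZMod 2)) (orderedBases n)
    (orderedBases_nonempty n) (leadSet i) (2 ^ (n - 1 - i)) a a2 (by positivity)
    (fun b hb => card_leadSet i ((mem_orderedBases b).mp hb))
    (fun b hb x hx => by
      rw [Finset.mem_erase]
      refine ⟨?_, Finset.mem_univ _⟩
      rintro rfl
      exact zero_notMem_leadSet i ((mem_orderedBases b).mp hb) hx)
    (fun x hx => ha x (Finset.ne_of_mem_erase hx))
    (fun x hx y hy => ha2 x (Finset.ne_of_mem_erase hx) y (Finset.ne_of_mem_erase hy))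
    s (fun x hx => Finset.mem_erase.mpr ⟨hs x hx, Finset.mem_univ _⟩) hsn
  have hW : ((Finset.univ.erase (0 : Fin n → ZMod 2)).card : ℝ) ≤
      2 ^ ((i : ℕ) + 1) * 2 ^ (n - 1 - i) := by
    have : (Finset.univ.erase (0 : Fin n → ZMod 2)).card ≤ 2 ^ n :=
      (Finset.card_le_univ _).trans (by simp)
    rw [← pow_add, show (i : ℕ) + 1 + (n - 1 - i) = n by omega]
    exact_mod_cast this
  refine le_of_mul_le_mul_right (a := (2 : ℝ) ^ (n - 1 - i)) ?_ (by positivity)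
  push_cast at main
  calc _ = _ := by ring
    _ ≤ _ := main
    _ ≤ (orderedBases n).card * (2 ^ ((i : ℕ) + 1) * 2 ^ (n - 1 - i)) := by gcongr
    _ = _ := by ring

/-- There is an absolute constant `c > 0` such that the following holds for every `n ≥ 1`.
Let `S` be a nonempty set of nonzero vectors of `𝔽₂ⁿ` of rank `r`, and for each ordered
basis `b` of `𝔽₂ⁿ` let `F b` send each nonzero vector `x = ∑_{i ∈ T} b i` (with `T` the
unique nonempty index set of its expansion) to `min T`.  Then the average, over a uniformly
random ordered basis `b`, of the number of distinct values of `F b` on `S` is at least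
`(1 - 1/e) · log₂ r - c`. -/
theorem stmt18 : ∃ c : ℝ, 0 < c ∧ ∀ n : ℕ, 1 ≤ n →
    ∀ S : Set (Fin n → ZMod 2), S.Nonempty → (∀ x ∈ S, x ≠ 0) →
    ∀ F : (Fin n → (Fin n → ZMod 2)) → ((Fin n → ZMod 2) → Fin n),
    (∀ b : Fin n → (Fin n → ZMod 2), LinearIndependent (ZMod 2) b → ∀ x ∈ S,
      ∃ T : Finset (Fin n), x = ∑ i ∈ T, b i ∧ F b x ∈ T ∧ ∀ j ∈ T, F b x ≤ j) →
    (1 - 1 / Real.exp 1) * Real.logb 2 (spanRank (ZMod 2) S) - c ≤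
      (∑ b ∈ orderedBases n, ((F b '' S).ncard : ℝ)) / ((orderedBases n).card : ℝ) := by
  classical
  refine ⟨3, by norm_num, ?_⟩
  intro n hn S hS hS0 F hF
  set r := spanRank (ZMod 2) S with hr
  set s : Finset (Fin n → ZMod 2) := S.toFinset with hsdef
  have hs0 : ∀ x ∈ s, x ≠ 0 := fun x hx => hS0 x (by simpa [s] using hx)
  have hsn : s.Nonempty := by simpa [s] using hS
  have hrs : r ≤ s.card := finrank_span_le_card S
  have hrn : r ≤ n := by
    have := Submodule.finrank_le (Submodule.span (ZMod 2) S)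
    simpa [hr, spanRank] using this
  have hrpos : 0 < r := by
    rw [hr, spanRank, Module.finrank_pos_iff_exists_ne_zero]
    obtain ⟨x, hx⟩ := hS
    exact ⟨⟨x, Submodule.subset_span hx⟩, fun h => hS0 x hx (by simpa using h)⟩
  set k := Nat.log 2 r with hk
  have hkr : 2 ^ k ≤ r := Nat.pow_log_le_self 2 hrpos.ne'
  have hkn : k ≤ n := (Nat.lt_two_pow_self.le.trans hkr).trans hrn
  set B := orderedBases n with hB
  have hBpos : (0 : ℝ) < B.card := by
    exact_mod_cast (orderedBases_nonempty n).card_pos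
  have hrR : (0 : ℝ) < r := by exact_mod_cast hrpos
  -- bad counts
  have bad : ∀ i : Fin k,
      ((B.filter (fun b => s ∩ leadSet (Fin.castLE hkn i) b = ∅)).card : ℝ)
        ≤ B.card * (2 ^ ((i : ℕ) + 1) / r) := by
    intro i
    have h := miss_bound (Fin.castLE hkn i) s hs0 hsn
    rw [mul_div_assoc', le_div_iff₀ hrR]
    refine le_trans ?_ h
    gcongr
  have point : ∀ b ∈ B, (k : ℝ) - ∑ i : Fin k,
      (if s ∩ leadSet (Fin.castLE hkn i) b = ∅ then (1 : ℝ) else 0) ≤ ((F b '' S).ncard : ℝ) := by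
    intro b hb
    have hli := (mem_orderedBases b).mp hb
    have h1 : (k : ℝ) - ∑ i : Fin k,
        (if s ∩ leadSet (Fin.castLE hkn i) b = ∅ then (1 : ℝ) else 0)
        = ((Finset.univ.filter
          (fun i : Fin k => ¬ s ∩ leadSet (Fin.castLE hkn i) b = ∅)).card : ℝ) := by
      have h := Finset.card_filter_add_card_filter_not (s := (Finset.univ : Finset (Fin k)))
        (fun i : Fin k => s ∩ leadSet (Fin.castLE hkn i) b = ∅)
      rw [Finset.card_univ, Fintype.card_fin] at h
      rw [Finset.sum_boole, sub_eq_iff_eq_add, add_comm]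
      exact_mod_cast h.symm
    rw [h1, Set.ncard_eq_toFinset_card']
    norm_cast
    refine Finset.card_le_card_of_injOn (Fin.castLE hkn) ?_ (Fin.castLE_injective hkn).injOn
    intro i hi
    have hi' := (Finset.mem_filter.mp hi).2
    obtain ⟨x, hx⟩ := Finset.nonempty_iff_ne_empty.mpr hi'
    rw [Finset.mem_inter, mem_leadSet] at hx
    obtain ⟨hxs, T, ⟨hiT, hTmin⟩, hxT⟩ := hx
    have hxS : x ∈ S := by simpa [s] using hxs
    obtain ⟨U, hxU, hFU, hUmin⟩ := hF b hli x hxS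
    have hTU : T = U := sum_inj hli (hxT.symm.trans hxU)
    subst hTU
    have : F b x = Fin.castLE hkn i := le_antisymm (hUmin _ hiT) (hTmin _ hFU)
    simp only [Finset.mem_coe, Set.mem_toFinset]
    exact ⟨x, hxS, this⟩
  have total : (B.card : ℝ) * (k - 2) ≤ ∑ b ∈ B, ((F b '' S).ncard : ℝ) := by
    refine le_trans ?_ (Finset.sum_le_sum point)
    rw [Finset.sum_sub_distrib, Finset.sum_comm, Finset.sum_const, nsmul_eq_mul, mul_sub]
    refine sub_le_sub_left ?_ _
    calc _ ≤ ∑ i : Fin k, (B.card : ℝ) * (2 ^ ((i : ℕ) + 1) / r) := by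
          refine Finset.sum_le_sum fun i _ => ?_
          rw [Finset.sum_boole]
          exact bad i
      _ = B.card * ((∑ i ∈ Finset.range k, (2 : ℝ) ^ (i + 1)) / r) := by
          rw [← Finset.mul_sum, ← Finset.sum_div,
            Fin.sum_univ_eq_sum_range (fun i => (2 : ℝ) ^ (i + 1))]
      _ ≤ B.card * 2 := by
          gcongr
          rw [div_le_iff₀ hrR]
          have e : ∑ i ∈ Finset.range k, (2 : ℝ) ^ (i + 1) = 2 * (2 ^ k - 1) := by
            simp_rw [pow_succ']
            rw [← Finset.mul_sum, geom_sum_eq (by norm_num)]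
            norm_num
          rw [e]
          have : (2 : ℝ) ^ k ≤ r := by exact_mod_cast hkr
          linarith
  rw [le_div_iff₀ hBpos]
  refine le_trans ?_ total
  rw [mul_comm]
  refine mul_le_mul_of_nonneg_left ?_ hBpos.le
  have hlog0 : 0 ≤ Real.logb 2 r := Real.logb_nonneg (by norm_num) (by exact_mod_cast hrpos)
  have hlogk : Real.logb 2 r ≤ k + 1 := by
    rw [Real.logb_le_iff_le_rpow (by norm_num) hrR]
    have h : r < 2 ^ (k + 1) := Nat.lt_pow_succ_log_self (by norm_num) r
    have h' : (r : ℝ) ≤ 2 ^ (k + 1) := by exact_mod_cast h.le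
    calc (r : ℝ) ≤ 2 ^ (k + 1) := h'
      _ = _ := by rw [← Real.rpow_natCast]; push_cast; rfl
  have he : 0 ≤ 1 / Real.exp 1 := by positivity
  nlinarith [mul_nonneg he hlog0]
end
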